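/- arXiv:2003.13286 — 7 statements merged into one kernel-verified Lean document; each statement's English description precedes it below -/
import Mathlib

section
/- Let n, p, λ be real numbers with λ ≠ 0 and define h(r, ρ) = (r² + λ²·ρ²)^p · r^{2(n−p)} for r > 0. Then at every point (r, ρ) with r > 0, the flat Laplacian of log h satisfies ∂²_{rr} log h + ∂²_{ρρ} log h = −2·[(n−p)/r² − p·(λ² − 1)·(r² − λ²·ρ²)/(r² + λ²·ρ²)²]. Consequently the Gaussian curvature K = −(1/(2h))·(∂²_{rr} log h + ∂²_{ρρ} log h) of the conformal metric h·(dr²+dρ²) equals h^{-1}·[(n−p)/r² − p·(λ²−1)·(r² − λ²·ρ²)/(r² + λ²·ρ²)²]. -/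
open Real

theorem log_factor_aux (a b c q : ℝ) (ha : 0 < a) (hb : 0 < b) :
    Real.log (a ^ c * b ^ q) = c * Real.log a + q * Real.log b := by
  rw [Real.log_mul (Real.rpow_pos_of_pos ha _).ne' (Real.rpow_pos_of_pos hb _).ne',
    Real.log_rpow ha, Real.log_rpow hb]

theorem deriv_rr_aux (p q c r : ℝ) (hc : 0 ≤ c) (hr : 0 < r) :
    deriv (deriv (fun x : ℝ => Real.log ((x ^ 2 + c) ^ p * x ^ q))) r
      = 2 * p * (c - r ^ 2) / (r ^ 2 + c) ^ 2 - q / r ^ 2 := by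
  have h1 : ∀ x : ℝ, 0 < x → HasDerivAt (fun x : ℝ => Real.log ((x ^ 2 + c) ^ p * x ^ q))
      (p * (2 * x / (x ^ 2 + c)) + q * x⁻¹) x := by
    intro x hx
    have hS : 0 < x ^ 2 + c := by positivity
    have hd : HasDerivAt (fun x : ℝ => x ^ 2 + c) (2 * x) x := by
      simpa using (hasDerivAt_pow 2 x).add_const c
    have h := ((hd.log hS.ne').const_mul p).add ((Real.hasDerivAt_log hx.ne').const_mul q)
    refine h.congr_of_eventuallyEq ?_
    filter_upwards [lt_mem_nhds hx] with y hy
    exact log_factor_aux _ _ _ _ (by positivity) hy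
  have h2 : deriv (fun x : ℝ => Real.log ((x ^ 2 + c) ^ p * x ^ q)) =ᶠ[nhds r]
      fun x => p * (2 * x / (x ^ 2 + c)) + q * x⁻¹ := by
    filter_upwards [lt_mem_nhds hr] with y hy
    exact (h1 y hy).deriv
  rw [h2.deriv_eq]
  have hS : 0 < r ^ 2 + c := by positivity
  have hd : HasDerivAt (fun x : ℝ => x ^ 2 + c) (2 * r) r := by
    simpa using (hasDerivAt_pow 2 r).add_const c
  have h3 := ((((hasDerivAt_id r).const_mul 2).div hd hS.ne').const_mul p).add
    ((hasDerivAt_inv hr.ne').const_mul q)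
  refine h3.deriv.trans ?_
  simp only [id]
  field_simp
  ring

theorem deriv_pp_aux (p q l r ρ : ℝ) (hr : 0 < r) :
    deriv (deriv (fun x : ℝ => Real.log ((r ^ 2 + l ^ 2 * x ^ 2) ^ p * r ^ q))) ρ
      = 2 * p * l ^ 2 * (r ^ 2 - l ^ 2 * ρ ^ 2) / (r ^ 2 + l ^ 2 * ρ ^ 2) ^ 2 := by
  have hd : ∀ x : ℝ, HasDerivAt (fun x : ℝ => r ^ 2 + l ^ 2 * x ^ 2) (l ^ 2 * (2 * x)) x := by
    intro x
    simpa using ((hasDerivAt_pow 2 x).const_mul (l ^ 2)).const_add (r ^ 2)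
  have hS : ∀ x : ℝ, 0 < r ^ 2 + l ^ 2 * x ^ 2 := fun x => by positivity
  have h0 : (fun x : ℝ => Real.log ((r ^ 2 + l ^ 2 * x ^ 2) ^ p * r ^ q))
      = fun x => p * Real.log (r ^ 2 + l ^ 2 * x ^ 2) + q * Real.log r :=
    funext fun x => log_factor_aux _ _ _ _ (hS x) hr
  have h2 : deriv (fun x : ℝ => Real.log ((r ^ 2 + l ^ 2 * x ^ 2) ^ p * r ^ q)) =
      fun x => p * (l ^ 2 * (2 * x) / (r ^ 2 + l ^ 2 * x ^ 2)) := by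
    rw [h0]
    funext x
    exact ((((hd x).log (hS x).ne').const_mul p).add_const _).deriv
  rw [h2]
  have h3 := ((((hasDerivAt_id ρ).const_mul 2).const_mul (l ^ 2)).div (hd ρ) (hS ρ).ne').const_mul p
  refine h3.deriv.trans ?_
  have := (hS ρ).ne'
  simp only [id]
  field_simp
  ring

/-- the flat Laplacian of `log h` for
`h(r,ρ) = (r² + λ²ρ²)^p · r^{2(n−p)}`, and the resulting Gaussian curvature
of the conformal metric `h·(dr²+dρ²)`. -/
theorem laplacian_log_conformal_factor (n p lam : ℝ) (hlam : lam ≠ 0) (r ρ : ℝ) (hr : r > 0) :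
    deriv (deriv (fun r' : ℝ =>
        Real.log ((r' ^ 2 + lam ^ 2 * ρ ^ 2) ^ p * r' ^ (2 * (n - p))))) r
      + deriv (deriv (fun ρ' : ℝ =>
        Real.log ((r ^ 2 + lam ^ 2 * ρ' ^ 2) ^ p * r ^ (2 * (n - p))))) ρ
      = -2 * ((n - p) / r ^ 2
          - p * (lam ^ 2 - 1) * (r ^ 2 - lam ^ 2 * ρ ^ 2) / (r ^ 2 + lam ^ 2 * ρ ^ 2) ^ 2) ∧
    -(1 / (2 * ((r ^ 2 + lam ^ 2 * ρ ^ 2) ^ p * r ^ (2 * (n - p)))))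
        * (deriv (deriv (fun r' : ℝ =>
            Real.log ((r' ^ 2 + lam ^ 2 * ρ ^ 2) ^ p * r' ^ (2 * (n - p))))) r
          + deriv (deriv (fun ρ' : ℝ =>
            Real.log ((r ^ 2 + lam ^ 2 * ρ' ^ 2) ^ p * r ^ (2 * (n - p))))) ρ)
      = ((r ^ 2 + lam ^ 2 * ρ ^ 2) ^ p * r ^ (2 * (n - p)))⁻¹
          * ((n - p) / r ^ 2
            - p * (lam ^ 2 - 1) * (r ^ 2 - lam ^ 2 * ρ ^ 2) / (r ^ 2 + lam ^ 2 * ρ ^ 2) ^ 2) := by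
  have key := deriv_rr_aux p (2 * (n - p)) (lam ^ 2 * ρ ^ 2) r (by positivity) hr
  have key2 := deriv_pp_aux p (2 * (n - p)) lam r ρ hr
  have hS : 0 < r ^ 2 + lam ^ 2 * ρ ^ 2 := by positivity
  have hh : 0 < (r ^ 2 + lam ^ 2 * ρ ^ 2) ^ p * r ^ (2 * (n - p)) :=
    mul_pos (Real.rpow_pos_of_pos hS _) (Real.rpow_pos_of_pos hr _)
  rw [key, key2]
  generalize (r ^ 2 + lam ^ 2 * ρ ^ 2) ^ p * r ^ (2 * (n - p)) = H at hh
  have e : 2 * p * (lam ^ 2 * ρ ^ 2 - r ^ 2) / (r ^ 2 + lam ^ 2 * ρ ^ 2) ^ 2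
      - 2 * (n - p) / r ^ 2
      + 2 * p * lam ^ 2 * (r ^ 2 - lam ^ 2 * ρ ^ 2) / (r ^ 2 + lam ^ 2 * ρ ^ 2) ^ 2
      = -2 * ((n - p) / r ^ 2
          - p * (lam ^ 2 - 1) * (r ^ 2 - lam ^ 2 * ρ ^ 2) / (r ^ 2 + lam ^ 2 * ρ ^ 2) ^ 2) := by
    ring
  refine ⟨e, ?_⟩
  rw [e, one_div, mul_inv]
  ring
end

section
/- Let n, p be real numbers with n > p > 0, let λ > 1, and let t > 0 satisfy n − p = p·(λ² − 1)/(1 + λ²·t²). Then for every r > 0, ((r² + λ²·t²·r²)^p · r^{2(n−p)})^{-1} · [(n−p)/r² − p·(λ² − 1)·(r² − λ²·t²·r²)/(r² + λ²·t²·r²)²] = (2·(n−p)/((1 + λ²·t²)^p · r^{2(n+1)})) · (1 − 1/(1 + λ²·t²)). That is, along the cone curve ρ = t·r (with t = tan θ), the Gaussian curvature of the canonical metric equals K(r) = 2(n−p)·(1 − 1/(1+λ²t²)) / ((1+λ²t²)^p · r^{2(n+1)}). -/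
open Real

/-- along the cone curve `ρ = t·r`, the Gaussian curvature of the
canonical metric equals `2(n−p)(1 − 1/(1+λ²t²)) / ((1+λ²t²)^p · r^{2(n+1)})`. -/
theorem curvature_along_cone_curve (n p lam t : ℝ)
    (hnp : n > p) (hp : p > 0) (hlam : lam > 1) (ht : t > 0)
    (hbal : n - p = p * (lam ^ 2 - 1) / (1 + lam ^ 2 * t ^ 2)) :
    ∀ r > (0 : ℝ),
      ((r ^ 2 + lam ^ 2 * t ^ 2 * r ^ 2) ^ p * r ^ (2 * (n - p)))⁻¹
          * ((n - p) / r ^ 2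
            - p * (lam ^ 2 - 1) * (r ^ 2 - lam ^ 2 * t ^ 2 * r ^ 2)
              / (r ^ 2 + lam ^ 2 * t ^ 2 * r ^ 2) ^ 2)
        = 2 * (n - p) / ((1 + lam ^ 2 * t ^ 2) ^ p * r ^ (2 * (n + 1)))
            * (1 - 1 / (1 + lam ^ 2 * t ^ 2)) := by
  intro r hr
  have ha : 0 < lam ^ 2 * t ^ 2 := by positivity
  generalize lam ^ 2 * t ^ 2 = a at *
  have hA : 0 < 1 + a := by linarith
  have hb : p * (lam ^ 2 - 1) = (n - p) * (1 + a) := by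
    rw [hbal]; field_simp
  rw [hb]
  have h1 : r ^ 2 + a * r ^ 2 = (1 + a) * r ^ 2 := by ring
  have h2 : ((1 + a) * r ^ 2) ^ p = (1 + a) ^ p * r ^ (2 * p) := by
    rw [Real.mul_rpow hA.le (by positivity), Real.rpow_mul hr.le, Real.rpow_two]
  have h3 : r ^ (2 * (n + 1)) = r ^ (2 * p) * r ^ (2 * (n - p)) * r ^ 2 := by
    rw [← Real.rpow_two r, ← Real.rpow_add hr, ← Real.rpow_add hr]
    congr 1; ring
  rw [h1, h2, h3]
  have e1 : 0 < (1 + a) ^ p := Real.rpow_pos_of_pos hA _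
  have e2 : 0 < r ^ (2 * p) := Real.rpow_pos_of_pos hr _
  have e3 : 0 < r ^ (2 * (n - p)) := Real.rpow_pos_of_pos hr _
  generalize (1 + a) ^ p = x at *
  generalize r ^ (2 * p) = y at *
  generalize r ^ (2 * (n - p)) = z at *
  clear hbal hb h1 h2 h3
  field_simp
  ring
end

section
/- Let n, p, k be positive real numbers with n > p and set λ² = k·(k+n−1)/p. Assume p·λ² > n and λ > 1, and set t² = (p·λ² − n)/(λ²·(n − p)). Then 2·(n−p)·(1 − 1/(1 + λ²·t²))·(1 + t²)/(n+1)² = 2·(k² + k·n − k − n)·n/((k+n−1)·k·(n+1)²). In other words, in the arc-length parameter s along the LOC curve, the Gaussian curvature of the canonical metric is K(s) = a/s² with a = 2(k²+kn−k−n)n/((k+n−1)k(n+1)²). -/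
open Real

/-- in the arc-length parameter, the Gaussian curvature of the
canonical metric along the LOC curve is `K(s) = a/s²` with
`a = 2(k²+kn−k−n)n/((k+n−1)k(n+1)²)`. -/
theorem curvature_coefficient (n p k lam t : ℝ)
    (hn : 0 < n) (hp : 0 < p) (hk : 0 < k) (hnp : n > p)
    (hlam2 : lam ^ 2 = k * (k + n - 1) / p)
    (hpl : p * lam ^ 2 > n) (hlam : lam > 1)
    (ht2 : t ^ 2 = (p * lam ^ 2 - n) / (lam ^ 2 * (n - p))) :
    2 * (n - p) * (1 - 1 / (1 + lam ^ 2 * t ^ 2)) * (1 + t ^ 2) / (n + 1) ^ 2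
      = 2 * (k ^ 2 + k * n - k - n) * n / ((k + n - 1) * k * (n + 1) ^ 2) := by
  have hL : 1 < lam ^ 2 := by nlinarith
  have hpL : k * (k + n - 1) = p * lam ^ 2 := by
    rw [hlam2]; field_simp
  have e1 : k ^ 2 + k * n - k - n = p * lam ^ 2 - n := by rw [← hpL]; ring
  have e2 : (k + n - 1) * k = p * lam ^ 2 := by rw [← hpL]; ring
  rw [e1, e2, ht2]
  clear hlam2 ht2 e1 e2 hpL hpl
  generalize lam ^ 2 = L at *
  have h1 : n - p ≠ 0 := (sub_pos.2 hnp).ne'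
  have h2 : L - 1 ≠ 0 := (sub_pos.2 hL).ne'
  have h3 : L ≠ 0 := (by linarith : 0 < L).ne'
  have h4 : n + 1 ≠ 0 := by positivity
  have a1 : 1 + L * ((p * L - n) / (L * (n - p))) = p * (L - 1) / (n - p) := by
    field_simp; ring
  have a2 : 1 + (p * L - n) / (L * (n - p)) = n * (L - 1) / (L * (n - p)) := by
    field_simp; ring
  rw [a1, a2]
  field_simp
  ring
end

section
/- Let a be a real number with 4a ≤ 1. If J : (0, ∞) → ℝ is twice differentiable and satisfies J''(s) + (a/s²)·J(s) = 0 for all s > 0, and J vanishes at two distinct points s₁, s₂ with 0 < s₁ < s₂, then J is identically zero on (0, ∞). Consequently, when 4a ≤ 1 the LOC segment contains no pair of conjugate points and has index zero (it is stable). -/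
open Real

lemma const_of_hasDerivAt_zero (f : ℝ → ℝ) (h : ∀ s > (0 : ℝ), HasDerivAt f 0 s)
    (x y : ℝ) (hx : 0 < x) (hy : 0 < y) : f x = f y :=
  isOpen_Ioi.is_const_of_deriv_eq_zero (s := Set.Ioi (0 : ℝ)) isPreconnected_Ioi
    (fun s hs => (h s hs).differentiableAt.differentiableWithinAt)
    (fun s hs => (h s hs).deriv) hx hy

/-- Multiplying by a power: derivative of `f s * s ^ (-r)`. -/
lemma hasDerivAt_mul_rpow_neg (f : ℝ → ℝ) (f' r s : ℝ) (hs : 0 < s) (h : HasDerivAt f f' s) :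
    HasDerivAt (fun t => f t * t ^ (-r)) ((s * f' - r * f s) * (s ^ (-r) / s)) s := by
  have h1 := h.mul (Real.hasDerivAt_rpow_const (x := s) (p := -r) (Or.inl hs.ne'))
  refine h1.congr_deriv ?_
  rw [Real.rpow_sub_one hs.ne']
  field_simp
  ring

/-- when `4a ≤ 1`, a solution of the Jacobi equation
`J'' + (a/s²)J = 0` on `(0,∞)` vanishing at two distinct points is identically
zero (no conjugate points: the LOC segment is stable). -/
theorem jacobi_no_conjugate_points (a : ℝ) (ha : 4 * a ≤ 1) (J : ℝ → ℝ)
    (hdiff : ∀ s > (0 : ℝ), DifferentiableAt ℝ J s ∧ DifferentiableAt ℝ (deriv J) s)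
    (hode : ∀ s > (0 : ℝ), deriv (deriv J) s + a / s ^ 2 * J s = 0)
    (s₁ s₂ : ℝ) (hs₁ : 0 < s₁) (hs₁₂ : s₁ < s₂)
    (hJ₁ : J s₁ = 0) (hJ₂ : J s₂ = 0) :
    ∀ s > (0 : ℝ), J s = 0 := by
  obtain ⟨p, hp⟩ : ∃ p : ℝ, p * (1 - p) = a := by
    refine ⟨(1 + √(1 - 4 * a)) / 2, ?_⟩
    have := Real.sq_sqrt (show 0 ≤ 1 - 4 * a by linarith)
    nlinarith
  set G : ℝ → ℝ := fun s => s * deriv J s - p * J s with hG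
  have hGd : ∀ s > (0 : ℝ), HasDerivAt G ((1 - p) * G s / s) s := by
    intro s hs
    have h1 := ((hasDerivAt_id s).mul (hdiff s hs).2.hasDerivAt).sub
      ((hdiff s hs).1.hasDerivAt.const_mul p)
    refine h1.congr_deriv ?_
    have h2 : deriv (deriv J) s = -(a / s ^ 2 * J s) := by linarith [hode s hs]
    simp only [h2, hG, id, ← hp]
    field_simp
    ring
  have hGc : ∀ s > (0 : ℝ), HasDerivAt (fun t => G t * t ^ (-(1 - p))) 0 s := by
    intro s hs
    refine (hasDerivAt_mul_rpow_neg G _ (1 - p) s hs (hGd s hs)).congr_deriv ?_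
    field_simp
    ring
  have hJd : ∀ s > (0 : ℝ), HasDerivAt (fun t => J t * t ^ (-p)) (G s * (s ^ (-p) / s)) s :=
    fun s hs => hasDerivAt_mul_rpow_neg J _ p s hs (hdiff s hs).1.hasDerivAt
  obtain ⟨c, hc, hc0⟩ := exists_hasDerivAt_eq_zero (f := fun t => J t * t ^ (-p))
    (f' := fun s => G s * (s ^ (-p) / s)) hs₁₂
    (fun s hs => (hJd s (hs₁.trans_le hs.1)).continuousAt.continuousWithinAt)
    (by simp [hJ₁, hJ₂]) (fun s hs => hJd s (hs₁.trans hs.1))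
  have hcpos : 0 < c := hs₁.trans hc.1
  have hGc0 : G c = 0 := by
    have : c ^ (-p) / c ≠ 0 := (div_pos (Real.rpow_pos_of_pos hcpos _) hcpos).ne'
    simpa [this] using (mul_eq_zero.mp hc0).resolve_right this
  have hG0 : ∀ s > (0 : ℝ), G s = 0 := by
    intro s hs
    have h := const_of_hasDerivAt_zero _ hGc s c hs hcpos
    simp only [hGc0, zero_mul] at h
    exact (mul_eq_zero.mp h).resolve_right (Real.rpow_pos_of_pos hs _).ne'
  intro s hs
  have h := const_of_hasDerivAt_zero (fun t => J t * t ^ (-p))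
    (fun t ht => (hJd t ht).congr_deriv (by rw [hG0 t ht, zero_mul])) s s₁ hs hs₁
  simp only [hJ₁, zero_mul] at h
  exact (mul_eq_zero.mp h).resolve_right (Real.rpow_pos_of_pos hs _).ne'
end

section
/- Let a be a real number with 4a > 1 and set β = √(4a − 1)/2. Then the function J(s) = √s · sin(β · log s) satisfies J''(s) + (a/s²)·J(s) = 0 for all s > 0, is not identically zero, and vanishes at the infinitely many points s_m = exp(m·π/β) for every integer m; in particular J has infinitely many zeros in the interval (0, 1]. Consequently, when 4a > 1 every point of the LOC segment has infinitely many conjugate points along the segment (the segment is unstable). -/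
open Real

/-- when `4a > 1`, the function `J(s) = √s·sin(β·log s)` with
`β = √(4a−1)/2` solves the Jacobi equation, is not identically zero, vanishes
at the points `exp(mπ/β)` for all integers `m`, and has infinitely many zeros
in `(0,1]` (the LOC segment is unstable). -/
theorem jacobi_conjugate_points (a : ℝ) (ha : 4 * a > 1) (β : ℝ)
    (hβ : β = Real.sqrt (4 * a - 1) / 2) :
    (∀ s > (0 : ℝ),
      deriv (deriv (fun s : ℝ => Real.sqrt s * Real.sin (β * Real.log s))) s
        + a / s ^ 2 * (Real.sqrt s * Real.sin (β * Real.log s)) = 0) ∧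
    ¬ (∀ s > (0 : ℝ), Real.sqrt s * Real.sin (β * Real.log s) = 0) ∧
    (∀ m : ℤ, Real.sqrt (Real.exp (m * π / β))
        * Real.sin (β * Real.log (Real.exp (m * π / β))) = 0) ∧
    {s : ℝ | s ∈ Set.Ioc (0 : ℝ) 1 ∧
        Real.sqrt s * Real.sin (β * Real.log s) = 0}.Infinite := by
  have hpos : 0 < β := by
    rw [hβ]
    have : 0 < Real.sqrt (4 * a - 1) := Real.sqrt_pos.mpr (by linarith)
    linarith
  have haβ : a = β ^ 2 + 1 / 4 := by
    rw [hβ, div_pow, Real.sq_sqrt (by linarith)]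
    ring
  have hlog : ∀ s > (0 : ℝ), HasDerivAt (fun s : ℝ => β * Real.log s) (β * s⁻¹) s :=
    fun s hs => (Real.hasDerivAt_log hs.ne').const_mul β
  have h1 : ∀ s > (0 : ℝ),
      HasDerivAt (fun s : ℝ => Real.sqrt s * Real.sin (β * Real.log s))
        ((Real.sin (β * Real.log s) / 2 + β * Real.cos (β * Real.log s)) / Real.sqrt s) s := by
    intro s hs
    have hr : 0 < Real.sqrt s := Real.sqrt_pos.mpr hs
    have hrs : Real.sqrt s ^ 2 = s := Real.sq_sqrt hs.le
    refine HasDerivAt.congr_deriv ((Real.hasDerivAt_sqrt hs.ne').mul (hlog s hs).sin) ?_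
    generalize Real.sin (β * Real.log s) = S
    generalize Real.cos (β * Real.log s) = C
    generalize Real.sqrt s = r at *
    subst hrs
    field_simp
  have h2 : ∀ s > (0 : ℝ),
      HasDerivAt (fun s : ℝ =>
        (Real.sin (β * Real.log s) / 2 + β * Real.cos (β * Real.log s)) / Real.sqrt s)
        (-(a / s ^ 2 * (Real.sqrt s * Real.sin (β * Real.log s)))) s := by
    intro s hs
    have hr : 0 < Real.sqrt s := Real.sqrt_pos.mpr hs
    have hrs : Real.sqrt s ^ 2 = s := Real.sq_sqrt hs.le
    refine HasDerivAt.congr_deriv ((((hlog s hs).sin.div_const 2).add ((hlog s hs).cos.const_mul β)).div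
      (Real.hasDerivAt_sqrt hs.ne') hr.ne') ?_
    simp only [Pi.add_apply]
    rw [haβ]
    generalize Real.sin (β * Real.log s) = S
    generalize Real.cos (β * Real.log s) = C
    generalize Real.sqrt s = r at *
    subst hrs
    field_simp
    ring
  have h3 : ∀ m : ℤ, Real.sqrt (Real.exp (m * π / β))
        * Real.sin (β * Real.log (Real.exp (m * π / β))) = 0 := by
    intro m
    rw [Real.log_exp, mul_div_cancel₀ _ hpos.ne', Real.sin_int_mul_pi, mul_zero]
  refine ⟨?_, ?_, h3, ?_⟩
  · intro s hs
    have he : deriv (fun s : ℝ => Real.sqrt s * Real.sin (β * Real.log s)) =ᶠ[nhds s]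
        (fun s : ℝ =>
          (Real.sin (β * Real.log s) / 2 + β * Real.cos (β * Real.log s)) / Real.sqrt s) := by
      filter_upwards [lt_mem_nhds hs] with t ht using (h1 t ht).deriv
    rw [he.deriv_eq, (h2 s hs).deriv]
    ring
  · intro h
    have := h (Real.exp (π / 2 / β)) (Real.exp_pos _)
    rw [Real.log_exp, mul_div_cancel₀ _ hpos.ne', Real.sin_pi_div_two, mul_one] at this
    exact (Real.sqrt_pos.mpr (Real.exp_pos _)).ne' this
  · refine Set.infinite_of_injective_forall_mem
      (f := fun n : ℕ => Real.exp (((-(n : ℤ) : ℤ) : ℝ) * π / β)) ?_ ?_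
    · intro m n hmn
      have h := Real.exp_injective hmn
      rw [div_left_inj' hpos.ne', mul_left_inj' Real.pi_ne_zero] at h
      have h' : (-(m : ℤ)) = -(n : ℤ) := by exact_mod_cast h
      omega
    · intro n
      refine ⟨⟨Real.exp_pos _, ?_⟩, h3 _⟩
      rw [Real.exp_le_one_iff]
      apply div_nonpos_of_nonpos_of_nonneg _ hpos.le
      apply mul_nonpos_of_nonpos_of_nonneg _ Real.pi_pos.le
      push_cast
      simp
end

section
/- Let n ≥ 3 be an odd integer and k ≥ 2 an even integer. Then (n² − 6n + 1)·k² + (n−1)·(n² − 6n + 1)·k + 8·n² ≠ 0; equivalently, a = 2·(k² + k·n − k − n)·n/((k+n−1)·k·(n+1)²) is never equal to 1/4. -/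
open Real

/-- for odd `n ≥ 3` and even `k ≥ 2`, the borderline case
never occurs: the quadratic never vanishes, equivalently `a ≠ 1/4`. -/
theorem borderline_never_occurs (n k : ℕ) (hn3 : 3 ≤ n) (hodd : Odd n)
    (hk2 : 2 ≤ k) (heven : Even k) :
    ((n : ℝ) ^ 2 - 6 * n + 1) * (k : ℝ) ^ 2
        + ((n : ℝ) - 1) * ((n : ℝ) ^ 2 - 6 * n + 1) * k + 8 * (n : ℝ) ^ 2 ≠ 0 ∧
    2 * ((k : ℝ) ^ 2 + k * n - k - n) * n
        / (((k : ℝ) + n - 1) * k * ((n : ℝ) + 1) ^ 2) ≠ 1 / 4 := by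
  have key : ((n : ℝ) ^ 2 - 6 * n + 1) * (k : ℝ) ^ 2
        + ((n : ℝ) - 1) * ((n : ℝ) ^ 2 - 6 * n + 1) * k + 8 * (n : ℝ) ^ 2 ≠ 0 := by
    intro h
    have hk : (2 : ℝ) ≤ k := by exact_mod_cast hk2
    rcases lt_or_ge n 7 with h7 | h7
    · obtain ⟨m, rfl⟩ := hodd
      have hm : m = 1 ∨ m = 2 := by omega
      rcases hm with rfl | rfl
      · have h1 : (k : ℝ) * (k + 2) = 9 := by
          push_cast at h
          linarith
        have h2 : k * (k + 2) = 9 := by exact_mod_cast h1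
        have h3 : k < 4 := by nlinarith
        interval_cases k <;> omega
      · have h1 : (k : ℝ) * (k + 4) = 50 := by
          push_cast at h
          linarith
        have h2 : k * (k + 4) = 50 := by exact_mod_cast h1
        have h3 : k < 8 := by nlinarith
        interval_cases k <;> omega
    · have hn : (7 : ℝ) ≤ n := by exact_mod_cast h7
      have h1 : (0 : ℝ) < (n : ℝ) ^ 2 - 6 * n + 1 := by nlinarith
      have h2 : (0 : ℝ) < (n : ℝ) - 1 := by linarith
      have h3 : (0 : ℝ) < k := by linarith
      have h4 : (0 : ℝ) < ((n : ℝ) ^ 2 - 6 * n + 1) * (k : ℝ) ^ 2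
        + ((n : ℝ) - 1) * ((n : ℝ) ^ 2 - 6 * n + 1) * k + 8 * (n : ℝ) ^ 2 := by positivity
      linarith
  refine ⟨key, fun h => key ?_⟩
  have hk : (2 : ℝ) ≤ k := by exact_mod_cast hk2
  have hn : (3 : ℝ) ≤ n := by exact_mod_cast hn3
  have h1 : (0 : ℝ) < (k : ℝ) + n - 1 := by linarith
  have h2 : (0 : ℝ) < k := by linarith
  have h3 : ((k : ℝ) + n - 1) * k * ((n : ℝ) + 1) ^ 2 ≠ 0 := by positivity
  rw [div_eq_div_iff h3 (by norm_num)] at h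
  linarith
end

section
/- Let n, p, λ be real numbers and let ρ : (0, ∞) → ℝ be twice differentiable and satisfy for all r > 0 the evolution equation ρ''(r)/(1+ρ'(r)²) + (n−p)·ρ'(r)/r + p·(ρ'(r)/r − λ²·ρ(r)/r²)/(1 + λ²·ρ(r)²/r²) = 0. Define φ : ℝ → ℝ by φ(t) = ρ(e^t)/e^t and ψ = φ'. Then for all t ∈ ℝ: φ'(t) = ψ(t) and ψ'(t) = −ψ(t) − [(n − p + p/(1 + λ²·φ(t)²))·ψ(t) + (n − p + (1 − λ²)·p/(1 + λ²·φ(t)²))·φ(t)]·[1 + (φ(t) + ψ(t))²]. -/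
open Real

/-- the substitution `t = log r`, `φ(t) = ρ(e^t)/e^t`, `ψ = φ'`
converts the evolution equation into the first-order autonomous planar system. -/
theorem evolution_to_dynamical_system (n p lam : ℝ) (ρ : ℝ → ℝ)
    (hdiff : ∀ r > (0 : ℝ), DifferentiableAt ℝ ρ r ∧ DifferentiableAt ℝ (deriv ρ) r)
    (hode : ∀ r > (0 : ℝ),
      deriv (deriv ρ) r / (1 + deriv ρ r ^ 2) + (n - p) * deriv ρ r / r
        + p * (deriv ρ r / r - lam ^ 2 * ρ r / r ^ 2)
          / (1 + lam ^ 2 * ρ r ^ 2 / r ^ 2) = 0)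
    (φ ψ : ℝ → ℝ)
    (hφ : φ = fun t => ρ (Real.exp t) / Real.exp t)
    (hψ : ψ = deriv φ) :
    ∀ t : ℝ,
      deriv φ t = ψ t ∧
      deriv ψ t = -ψ t
        - ((n - p + p / (1 + lam ^ 2 * φ t ^ 2)) * ψ t
            + (n - p + (1 - lam ^ 2) * p / (1 + lam ^ 2 * φ t ^ 2)) * φ t)
          * (1 + (φ t + ψ t) ^ 2) := by
  have h1 : ∀ t, HasDerivAt φ (deriv ρ (Real.exp t) - φ t) t := by
    intro t
    have he := Real.hasDerivAt_exp t
    have hr : HasDerivAt (fun t => ρ (Real.exp t)) (deriv ρ (Real.exp t) * Real.exp t) t :=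
      HasDerivAt.comp t (hdiff _ (Real.exp_pos t)).1.hasDerivAt he
    have h := hr.fun_div he (Real.exp_pos t).ne'
    have e : (deriv ρ (Real.exp t) * Real.exp t * Real.exp t - ρ (Real.exp t) * Real.exp t)
        / Real.exp t ^ 2 = deriv ρ (Real.exp t) - φ t := by
      have h0 := (Real.exp_pos t).ne'
      have h3 : φ t = ρ (Real.exp t) / Real.exp t := by rw [hφ]
      rw [h3]
      generalize Real.exp t = r at *
      field_simp
    rw [e, ← hφ] at h
    exact h
  have hψ2 : ψ = fun t => deriv ρ (Real.exp t) - φ t := by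
    rw [hψ]
    funext t
    exact (h1 t).deriv
  intro t
  refine ⟨by rw [hψ], ?_⟩
  have h2 : HasDerivAt ψ (deriv (deriv ρ) (Real.exp t) * Real.exp t
      - (deriv ρ (Real.exp t) - φ t)) t := by
    have hr : HasDerivAt (fun t => deriv ρ (Real.exp t))
        (deriv (deriv ρ) (Real.exp t) * Real.exp t) t :=
      HasDerivAt.comp t (hdiff _ (Real.exp_pos t)).2.hasDerivAt (Real.hasDerivAt_exp t)
    rw [hψ2]
    exact hr.fun_sub (h1 t)
  rw [h2.deriv]
  have hr := Real.exp_pos t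
  have hode := hode _ hr
  have e1 : ρ (Real.exp t) = φ t * Real.exp t := by
    rw [hφ]
    field_simp
  have e2 : deriv ρ (Real.exp t) = φ t + ψ t := by
    rw [hψ2]
    ring
  rw [e1, e2] at hode
  rw [e2]
  generalize deriv (deriv ρ) (Real.exp t) = d at *
  generalize Real.exp t = r at *
  generalize φ t = a at *
  generalize ψ t = b at *
  have e3 : lam ^ 2 * (a * r) ^ 2 / r ^ 2 = lam ^ 2 * a ^ 2 := by
    field_simp
  rw [e3] at hode
  have hA : 1 + lam ^ 2 * a ^ 2 ≠ 0 := by positivity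
  have hB : 1 + (a + b) ^ 2 ≠ 0 := by positivity
  generalize hAA : 1 + lam ^ 2 * a ^ 2 = A at *
  generalize hBB : 1 + (a + b) ^ 2 = B at *
  have hr0 := hr.ne'
  field_simp at hode ⊢
  linear_combination hode
end
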